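/- The function q_s has no downward jumps: for every x₀ > 0, if q_s(x) tends to L as x tends to x₀ from the left (within (0,x₀)), then L ≤ q_s(x₀). -/

import Mathlib

/-!
The proof rests on a description of unique expansions through tails. For a digit sequence `d`
let `T q d n = ∑_j d_{n+j} q^{-(j+1)}`. Since every number in `[0, 1/(q-1)]` has a `q`-expansion
(the greedy one) for `1 < q ≤ 2`, the digit `d_n` of an expansion can be switched exactly when the
switch leaves a remainder in that interval. Hence `d` is the only expansion of its value iff
`T q d (n+1) < 1` whenever `d_n = 0`, and `1/(q-1) - T q d (n+1) < 1` whenever `d_n = 1`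
(`mem_UnivSet_iff`). Both left-hand sides are power series in `1/q` with nonnegative
coefficients, so they decrease when `q` grows: a sequence that is univoque in base `q` stays
univoque in every base `p ∈ (q, 2]` (`Univoque.mono`).

Let `q ∈ 𝒰(x₀)` with `q < 2`, with expansion `d`. Keeping `d` and letting the base `p` decrease to
`q`, the values `T p d 0` increase to `x₀` from strictly below, and `q_s (T p d 0) ≤ p`. So the
left limit `L` cannot exceed `q`. As `L ≤ 2` always, it follows that `L ≤ q_s(x₀)`, provided
`𝒰(x₀)` is nonempty (the infimum of the empty set would be `0`). For nonemptiness
(`UnivSet_nonempty`), explicit sequences suffice: `1^∞` for `x ≥ 1`, and `(10)^∞`, `100(10)^∞`,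
`0^a(10)^∞` with `a ≥ 1` for `x < 1`, the base being supplied by the intermediate value theorem.
-/

open Filter Set

noncomputable section

/-- `d` is a `q`-expansion of `x`: all digits lie in `{0,1}` and
`x = ∑_{i=1}^∞ d_i q^{-i}`.  Here `d i` stands for the digit `d_{i+1}`. -/
def IsExpansion (q x : ℝ) (d : ℕ → ℕ) : Prop :=
  (∀ i, d i ≤ 1) ∧ x = ∑' i : ℕ, (d i : ℝ) / q ^ (i + 1)

/-- `𝒰(x)`: the set of bases `q ∈ (1,2]` in which `x` has a unique expansion. -/
def UnivSet (x : ℝ) : Set ℝ :=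
  {q | q ∈ Set.Ioc (1 : ℝ) 2 ∧ ∃! d : ℕ → ℕ, IsExpansion q x d}

/-- `q_s(x) = inf 𝒰(x)`. -/
def qs (x : ℝ) : ℝ := sInf (UnivSet x)

/-- The level set `L(q) = {x > 0 : q_s(x) = q}`. -/
def levelSet (q : ℝ) : Set ℝ := {x | 0 < x ∧ qs x = q}

/-- The golden ratio `q_G = (1+√5)/2`. -/
def qG : ℝ := (1 + Real.sqrt 5) / 2

/-- The Thue–Morse sequence: `tm i = s_i mod 2`, where `s_i` is the number of
`1`s in the binary representation of `i`. -/
def tm (i : ℕ) : ℕ := (Nat.digits 2 i).sum % 2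

/-- The set `S ⊆ ℕ`: `2, 3, 4 ∈ S`, and for `k ≥ 2` and `2^k < n ≤ 2^{k+1}`,
`n ∈ S` iff `n > 3·2^{k-1}` and `n - 3·2^{k-1} ∈ S`; no other elements. -/
inductive memS : ℕ → Prop
  | two : memS 2
  | three : memS 3
  | four : memS 4
  | step (k n : ℕ) (hk : 2 ≤ k) (h1 : 2 ^ k < n) (h2 : n ≤ 2 ^ (k + 1))
      (h3 : 3 * 2 ^ (k - 1) < n) (h : memS (n - 3 * 2 ^ (k - 1))) : memS n

/-! ### Tails -/

/-- The tail `∑_{j ≥ 0} d_{n+j} q^{-(j+1)}` of the digit sequence `d` in base `q`. -/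
def T (q : ℝ) (d : ℕ → ℕ) (n : ℕ) : ℝ := ∑' j : ℕ, (d (n + j) : ℝ) / q ^ (j + 1)

/-- The tail condition characterizing sequences that are the unique expansion of their value:
no digit can be switched from `0` to `1` or from `1` to `0`. -/
def Univoque (q : ℝ) (d : ℕ → ℕ) : Prop :=
  ∀ n, (d n = 0 → T q d (n + 1) < 1) ∧ (d n = 1 → 1 / (q - 1) - T q d (n + 1) < 1)

lemma hasSum_ones {q : ℝ} (hq : 1 < q) : HasSum (fun j : ℕ => 1 / q ^ (j + 1)) (1 / (q - 1)) := by
  have h := (hasSum_geometric_of_lt_one (r := q⁻¹) (by positivity)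
    (inv_lt_one_of_one_lt₀ hq)).mul_left q⁻¹
  have h0 : q ≠ 0 := by linarith
  have e1 : (fun j : ℕ => 1 / q ^ (j + 1)) = fun i => q⁻¹ * q⁻¹ ^ i := by
    funext j
    rw [← pow_succ', inv_pow, one_div]
  have e2 : 1 / (q - 1) = q⁻¹ * (1 - q⁻¹)⁻¹ := by
    rw [← mul_inv, mul_sub, mul_one, mul_inv_cancel₀ h0, one_div]
  rw [e1, e2]
  exact h

lemma cast_le_one {d : ℕ → ℕ} (hd : ∀ i, d i ≤ 1) (i : ℕ) : (d i : ℝ) ≤ 1 := by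
  exact_mod_cast hd i

lemma summable_T {q : ℝ} (hq : 1 < q) {d : ℕ → ℕ} (hd : ∀ i, d i ≤ 1) (n : ℕ) :
    Summable (fun j : ℕ => (d (n + j) : ℝ) / q ^ (j + 1)) := by
  refine Summable.of_nonneg_of_le (fun j => by positivity) (fun j => ?_) (hasSum_ones hq).summable
  have := cast_le_one hd (n + j)
  gcongr

lemma T_nonneg {q : ℝ} (hq : 1 < q) (d : ℕ → ℕ) (n : ℕ) : 0 ≤ T q d n :=
  tsum_nonneg fun j => by positivity

lemma T_le {q : ℝ} (hq : 1 < q) {d : ℕ → ℕ} (hd : ∀ i, d i ≤ 1) (n : ℕ) :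
    T q d n ≤ 1 / (q - 1) := by
  rw [← (hasSum_ones hq).tsum_eq]
  refine (summable_T hq hd n).tsum_le_tsum (fun j => ?_) (hasSum_ones hq).summable
  have := cast_le_one hd (n + j)
  gcongr

lemma T_rec {q : ℝ} (hq : 1 < q) {d : ℕ → ℕ} (hd : ∀ i, d i ≤ 1) (n : ℕ) :
    q * T q d n = d n + T q d (n + 1) := by
  have h0 : q ≠ 0 := by linarith
  unfold T
  rw [(summable_T hq hd n).tsum_eq_zero_add, mul_add, ← tsum_mul_left]
  congr 1
  · simp
    field_simp
  · refine tsum_congr fun j => ?_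
    rw [show n + (j + 1) = n + 1 + j by ring, pow_succ q (j + 1)]
    field_simp

/-- The complementary tail `∑ (1 - d_{n+j}) q^{-(j+1)}`. -/
lemma compl_T {q : ℝ} (hq : 1 < q) {d : ℕ → ℕ} (hd : ∀ i, d i ≤ 1) (n : ℕ) :
    HasSum (fun j : ℕ => (1 - (d (n + j) : ℝ)) / q ^ (j + 1)) (1 / (q - 1) - T q d n) := by
  have h := (hasSum_ones hq).sub (summable_T hq hd n).hasSum
  simp only [sub_div]
  exact h

/-- The only bounded solution of the tail recursion is the sequence of tails: the difference of
two solutions grows like `q ^ n`. -/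
lemma T_eq_of_rec {q : ℝ} (hq : 1 < q) {d : ℕ → ℕ} (hd : ∀ i, d i ≤ 1) (t : ℕ → ℝ) (C : ℝ)
    (hC : ∀ n, |t n| ≤ C) (ht : ∀ n, q * t n = d n + t (n + 1)) (n : ℕ) : T q d n = t n := by
  have hu : ∀ k, T q d (n + k) - t (n + k) = q ^ k * (T q d n - t n) := by
    intro k
    induction k with
    | zero => simp
    | succ k ih =>
      have h1 := T_rec hq hd (n + k)
      have h2 := ht (n + k)
      rw [pow_succ, ← add_assoc]
      linear_combination q * ih - h1 + h2
  by_contra hne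
  have hpos : 0 < |T q d n - t n| := abs_pos.mpr (sub_ne_zero.mpr hne)
  obtain ⟨k, hk⟩ := pow_unbounded_of_one_lt ((1 / (q - 1) + C) / |T q d n - t n|) hq
  rw [div_lt_iff₀ hpos] at hk
  have h3 : |T q d (n + k) - t (n + k)| ≤ 1 / (q - 1) + C := by
    refine (abs_sub _ _).trans (add_le_add ?_ (hC _))
    rw [abs_of_nonneg (T_nonneg hq _ _)]
    exact T_le hq hd _
  rw [hu, abs_mul, abs_of_pos (by positivity : 0 < q ^ k)] at h3
  linarith

lemma T_congr_zero {q : ℝ} (hq : 1 < q) {d e : ℕ → ℕ} (hd : ∀ i, d i ≤ 1) (he : ∀ i, e i ≤ 1)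
    (n : ℕ) (h : ∀ i < n, d i = e i) (hT : T q d n = T q e n) : T q d 0 = T q e 0 := by
  induction n with
  | zero => exact hT
  | succ n ih =>
    refine ih (fun i hi => h i (by omega)) ?_
    have h1 := T_rec hq hd n
    have h2 := T_rec hq he n
    rw [h n (by omega), hT] at h1
    have h0 : q ≠ 0 := by linarith
    exact mul_left_cancel₀ h0 (h1.trans h2.symm)

lemma isExpansion_iff {q x : ℝ} {d : ℕ → ℕ} :
    IsExpansion q x d ↔ (∀ i, d i ≤ 1) ∧ x = T q d 0 := by
  simp [IsExpansion, T]

/-! ### The tail criterion for unique expansions -/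

/-- One step of the greedy algorithm on remainders. -/
def greedyStep (q r : ℝ) : ℝ := if 1 ≤ q * r then q * r - 1 else q * r

/-- The greedy algorithm shows that every point of `[0, 1/(q-1)]` has a `q`-expansion. -/
lemma exists_expansion {q : ℝ} (hq : q ∈ Set.Ioc (1 : ℝ) 2) {y : ℝ} (h0 : 0 ≤ y)
    (h1 : y ≤ 1 / (q - 1)) : ∃ e : ℕ → ℕ, (∀ i, e i ≤ 1) ∧ T q e 0 = y := by
  obtain ⟨hq1, hq2⟩ := hq
  have hp : 0 < q - 1 := by linarith
  have h1' : (1 : ℝ) ≤ 1 / (q - 1) := by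
    rw [le_div_iff₀ hp]
    linarith
  let r : ℕ → ℝ := fun n => (greedyStep q)^[n] y
  have hr : ∀ n, r (n + 1) = greedyStep q (r n) := fun n => Function.iterate_succ_apply' _ _ _
  have hb : ∀ n, 0 ≤ r n ∧ r n ≤ 1 / (q - 1) := by
    intro n
    induction n with
    | zero => exact ⟨h0, h1⟩
    | succ n ih =>
      obtain ⟨i1, i2⟩ := ih
      rw [hr, greedyStep]
      rw [le_div_iff₀ hp] at i2
      have hqr : 0 ≤ q * r n := by positivity
      split_ifs with hc
      · refine ⟨by linarith, ?_⟩
        rw [le_div_iff₀ hp]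
        nlinarith
      · exact ⟨hqr, by linarith⟩
  have hd : ∀ i, (fun n => if 1 ≤ q * r n then 1 else 0 : ℕ → ℕ) i ≤ 1 := by
    intro i
    dsimp only
    split_ifs <;> simp
  refine ⟨_, hd, ?_⟩
  refine T_eq_of_rec hq1 hd r (1 / (q - 1)) (fun n => ?_) (fun n => ?_) 0
  · rw [abs_of_nonneg (hb n).1]
    exact (hb n).2
  · rw [hr, greedyStep]
    split_ifs <;> simp

/-- If switching the digit `d n` to `b` leaves a remainder `y` in `[0, 1/(q-1)]`, then the value
of `d` has another expansion. -/
lemma exists_other {q : ℝ} (hq : q ∈ Set.Ioc (1 : ℝ) 2) {d : ℕ → ℕ} (hd : ∀ i, d i ≤ 1) (n b : ℕ)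
    (hb : b ≤ 1) (hbn : b ≠ d n) {y : ℝ} (h0 : 0 ≤ y) (h1 : y ≤ 1 / (q - 1))
    (hy : b + y = d n + T q d (n + 1)) :
    ∃ e : ℕ → ℕ, (∀ i, e i ≤ 1) ∧ T q e 0 = T q d 0 ∧ e ≠ d := by
  obtain ⟨e, he, hey⟩ := exists_expansion hq h0 h1
  let f : ℕ → ℕ := fun i => if i < n then d i else if i = n then b else e (i - (n + 1))
  have hf : ∀ i, f i ≤ 1 := by
    intro i
    simp only [f]
    split_ifs
    · exact hd i
    · exact hb
    · exact he _
  have hfn : f n = b := by simp [f]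
  have hT1 : T q f (n + 1) = y := by
    rw [← hey]
    unfold T
    refine tsum_congr fun j => ?_
    have : f (n + 1 + j) = e (0 + j) := by
      simp only [f]
      rw [if_neg (by omega), if_neg (by omega)]
      congr 1
      omega
    rw [this]
  refine ⟨f, hf, ?_, fun h => hbn (by rw [← hfn, h])⟩
  refine T_congr_zero hq.1 hf hd n (fun i hi => by simp [f, hi]) ?_
  have h2 := T_rec hq.1 hf n
  rw [hfn, hT1, hy, ← T_rec hq.1 hd n] at h2
  have hq0 : q ≠ 0 := by linarith [hq.1]
  exact mul_left_cancel₀ hq0 h2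

lemma eq_of_univoque {q : ℝ} (hq : 1 < q) {d e : ℕ → ℕ} (hd : ∀ i, d i ≤ 1) (he : ∀ i, e i ≤ 1)
    (hu : Univoque q d) (h : T q e 0 = T q d 0) : e = d := by
  have step : ∀ n, T q e n = T q d n → e n = d n ∧ T q e (n + 1) = T q d (n + 1) := by
    intro n hn
    have h1 := T_rec hq hd n
    have h2 := T_rec hq he n
    rw [hn, h1] at h2
    have hpos := T_nonneg hq e (n + 1)
    have hle := T_le hq he (n + 1)
    rcases Nat.le_one_iff_eq_zero_or_eq_one.mp (hd n) with a | a <;>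
      rcases Nat.le_one_iff_eq_zero_or_eq_one.mp (he n) with b | b <;>
      rw [a, b] at h2 <;> push_cast at h2
    · exact ⟨by rw [a, b], by linarith⟩
    · linarith [(hu n).1 a]
    · linarith [(hu n).2 a]
    · exact ⟨by rw [a, b], by linarith⟩
  have hT : ∀ n, T q e n = T q d n := by
    intro n
    induction n with
    | zero => exact h
    | succ n ih => exact (step n ih).2
  funext n
  exact (step n (hT n)).1

lemma mem_UnivSet_iff {q x : ℝ} : q ∈ UnivSet x ↔
    q ∈ Set.Ioc (1 : ℝ) 2 ∧ ∃ d : ℕ → ℕ, (∀ i, d i ≤ 1) ∧ T q d 0 = x ∧ Univoque q d := by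
  constructor
  · rintro ⟨hq, d, hdx, huniq⟩
    obtain ⟨hd, hx⟩ := isExpansion_iff.mp hdx
    have key : ∀ e : ℕ → ℕ, (∀ i, e i ≤ 1) ∧ T q e 0 = T q d 0 ∧ e ≠ d → False :=
      fun e he => he.2.2 (huniq e (isExpansion_iff.mpr ⟨he.1, by rw [hx, he.2.1]⟩))
    refine ⟨hq, d, hd, hx.symm, fun n => ⟨fun h0 => ?_, fun h1 => ?_⟩⟩
    · by_contra! hc
      obtain ⟨e, he⟩ := exists_other hq hd n 1 le_rfl (by omega) (y := T q d (n + 1) - 1)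
        (by linarith) (by linarith [T_le hq.1 hd (n + 1)]) (by rw [h0]; push_cast; ring)
      exact key e he
    · by_contra! hc
      obtain ⟨e, he⟩ := exists_other hq hd n 0 (by norm_num) (by omega) (y := 1 + T q d (n + 1))
        (by linarith [T_nonneg hq.1 d (n + 1)]) (by linarith) (by rw [h1]; push_cast; ring)
      exact key e he
  · rintro ⟨hq, d, hd, hx, hu⟩
    refine ⟨hq, d, isExpansion_iff.mpr ⟨hd, hx.symm⟩, fun e he => ?_⟩
    obtain ⟨he1, he2⟩ := isExpansion_iff.mp he
    exact eq_of_univoque hq.1 hd he1 hu (by rw [← he2, hx])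

/-- A sequence that is univoque in base `q` is univoque in every larger base. -/
lemma Univoque.mono {q p : ℝ} (hq : 1 < q) (hqp : q ≤ p) {d : ℕ → ℕ} (hd : ∀ i, d i ≤ 1)
    (hu : Univoque q d) : Univoque p d := by
  have hp : 1 < p := by linarith
  intro n
  refine ⟨fun h0 => lt_of_le_of_lt ?_ ((hu n).1 h0), fun h1 => lt_of_le_of_lt ?_ ((hu n).2 h1)⟩
  · refine (summable_T hp hd _).tsum_le_tsum (fun j => ?_) (summable_T hq hd _)
    gcongr
  · refine hasSum_le (fun j => ?_) (compl_T hp hd _) (compl_T hq hd _)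
    have : 0 ≤ 1 - (d (n + 1 + j) : ℝ) := by linarith [cast_le_one hd (n + 1 + j)]
    gcongr

/-! ### Nonemptiness of `𝒰(x)` -/

/-- Prepending an admissible digit to a unique expansion. -/
lemma prepend {q x : ℝ} (hx : q ∈ UnivSet x) (b : ℕ) (hb : b ≤ 1) (h0 : b = 0 → x < 1)
    (h1 : b = 1 → 1 / (q - 1) - x < 1) : q ∈ UnivSet ((b + x) / q) := by
  rw [mem_UnivSet_iff] at hx ⊢
  obtain ⟨hq, d, hd, rfl, hu⟩ := hx
  let f : ℕ → ℕ := fun i => Nat.casesOn i b d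
  have hf : ∀ i, f i ≤ 1 := by
    rintro (_ | i)
    · exact hb
    · exact hd i
  have hT : ∀ n, T q f (n + 1) = T q d n := by
    intro n
    refine tsum_congr fun j => ?_
    rw [show n + 1 + j = n + j + 1 by ring]
  refine ⟨hq, f, hf, ?_, ?_⟩
  · have h := T_rec hq.1 hf 0
    rw [hT] at h
    rw [eq_div_iff (by linarith [hq.1]), mul_comm]
    exact h
  · rintro (_ | n)
    · rw [hT]
      exact ⟨h0, h1⟩
    · rw [hT]
      exact hu n

lemma prepend_zeros {q x : ℝ} (hx : q ∈ UnivSet x) (hx0 : 0 ≤ x) (h1 : x < 1) (a : ℕ) :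
    q ∈ UnivSet (x / q ^ a) := by
  induction a with
  | zero => simpa using hx
  | succ a ih =>
    have hq : 1 < q := hx.1.1
    have h := prepend ih 0 (by norm_num)
      (fun _ => (div_le_self hx0 (one_le_pow₀ hq.le)).trans_lt h1) (by simp)
    rwa [Nat.cast_zero, zero_add, div_div, ← pow_succ] at h

/-- The sequence `(10)^∞` has value `q/(q²-1)`, and is univoque once this value is below `1`. -/
lemma alternating_mem {q : ℝ} (hq : q ∈ Set.Ioc (1 : ℝ) 2) (h : q / (q ^ 2 - 1) < 1) :
    q ∈ UnivSet (q / (q ^ 2 - 1)) := by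
  obtain ⟨hq1, hq2⟩ := id hq
  have hp : 0 < q - 1 := by linarith
  have hs : 0 < q ^ 2 - 1 := by nlinarith
  have hs' : q ^ 2 - 1 ≠ 0 := hs.ne'
  -- the complement of `(01)^∞` is `(10)^∞`
  have hc : 1 / (q - 1) - 1 / (q ^ 2 - 1) = q / (q ^ 2 - 1) := by
    have : q + 1 ≠ 0 := by linarith
    have : q - 1 ≠ 0 := hp.ne'
    rw [show q ^ 2 - 1 = (q - 1) * (q + 1) by ring]
    field_simp
    ring
  have hw : 1 / (q ^ 2 - 1) < q / (q ^ 2 - 1) := by gcongr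
  have hw0 : 0 < 1 / (q ^ 2 - 1) := by positivity
  let d : ℕ → ℕ := fun n => if n % 2 = 0 then 1 else 0
  let t : ℕ → ℝ := fun n => if n % 2 = 0 then q / (q ^ 2 - 1) else 1 / (q ^ 2 - 1)
  have hd : ∀ i, d i ≤ 1 := by
    intro i
    simp only [d]
    split_ifs <;> simp
  have hT : ∀ n, T q d n = t n := by
    refine T_eq_of_rec hq1 hd t 1 (fun n => ?_) (fun n => ?_)
    · simp only [t]
      split_ifs <;> rw [abs_of_pos] <;> linarith
    · simp only [t, d]
      rcases Nat.mod_two_eq_zero_or_one n with hn | hn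
      · rw [if_pos hn, if_pos hn, if_neg (by omega)]
        push_cast
        field_simp
        ring
      · rw [if_neg (by omega), if_neg (by omega), if_pos (by omega)]
        push_cast
        ring
  rw [mem_UnivSet_iff]
  refine ⟨hq, d, hd, by rw [hT]; simp [t], fun n => ?_⟩
  rw [hT]
  simp only [t, d]
  rcases Nat.mod_two_eq_zero_or_one n with hn | hn
  · rw [if_pos hn, if_neg (by omega)]
    exact ⟨by simp, fun _ => by linarith⟩
  · rw [if_neg (by omega), if_pos (by omega)]
    exact ⟨fun _ => h, by simp⟩

/-- For `q ≥ 81/50`, just above the golden ratio, `(10)^∞` has value below `1`. -/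
lemma alternating_lt_one {q : ℝ} (hq : 81 / 50 ≤ q) : q / (q ^ 2 - 1) < 1 := by
  rw [div_lt_one (by nlinarith)]
  nlinarith

lemma continuousOn_alternating {a : ℝ} (ha : 1 < a) :
    ContinuousOn (fun q : ℝ => q / (q ^ 2 - 1)) (Set.Icc a 2) := by
  refine ContinuousOn.div (by fun_prop) (by fun_prop) fun q hq => ?_
  have := hq.1
  nlinarith

/-- Every value taken by `0^a(10)^∞` for bases in `[81/50, 2]` has a univoque base. -/
lemma nonempty_of_zeros {x : ℝ} (a : ℕ) (h1 : 2 / 3 / 2 ^ a ≤ x)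
    (h2 : x ≤ (81 / 50) / ((81 / 50) ^ 2 - 1) / (81 / 50) ^ a) : (UnivSet x).Nonempty := by
  have hc : ContinuousOn (fun q : ℝ => q / (q ^ 2 - 1) / q ^ a) (Set.Icc (81 / 50) 2) := by
    refine (continuousOn_alternating (by norm_num)).div (by fun_prop) fun q hq => ?_
    have : 0 < q := by linarith [hq.1]
    positivity
  have hx : x ∈ Set.Icc ((fun q : ℝ => q / (q ^ 2 - 1) / q ^ a) 2)
      ((fun q : ℝ => q / (q ^ 2 - 1) / q ^ a) (81 / 50)) := by
    refine ⟨?_, h2⟩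
    norm_num at h1 ⊢
    exact h1
  obtain ⟨q, hq, rfl⟩ := intermediate_value_Icc' (by norm_num) hc hx
  have hlt := alternating_lt_one hq.1
  have hq1 : 1 < q := by linarith [hq.1]
  have hs : 0 < q ^ 2 - 1 := by nlinarith
  exact ⟨q, prepend_zeros (alternating_mem ⟨hq1, hq.2⟩ hlt) (by positivity) hlt a⟩

/-- Here the sequence `(10)^∞` is used, with a base in `[8/5, 2]`. -/
lemma nonempty_of_high {x : ℝ} (h1 : 2 / 3 ≤ x) (h2 : x < 1) : (UnivSet x).Nonempty := by
  have hx : x ∈ Set.Icc ((fun q : ℝ => q / (q ^ 2 - 1)) 2)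
      ((fun q : ℝ => q / (q ^ 2 - 1)) (8 / 5)) := by
    constructor
    · norm_num
      exact h1
    · norm_num
      linarith
  obtain ⟨q, hq, rfl⟩ := intermediate_value_Icc' (by norm_num)
    (continuousOn_alternating (by norm_num)) hx
  exact ⟨q, alternating_mem ⟨by linarith [hq.1], hq.2⟩ h2⟩

/-- Here the sequence `100(10)^∞` is used, with a base in `[181/100, 2]`. -/
lemma nonempty_of_gap {x : ℝ} (h1 : 3 / 5 ≤ x) (h2 : x ≤ 2 / 3) : (UnivSet x).Nonempty := by
  have hc : ContinuousOn (fun q : ℝ => ((1 : ℕ) + q / (q ^ 2 - 1) / q ^ 2) / q)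
      (Set.Icc (181 / 100) 2) := by
    have hne : ∀ q ∈ Set.Icc (181 / 100 : ℝ) 2, q ≠ 0 := fun q hq => by
      have := hq.1
      linarith
    refine ContinuousOn.div (continuousOn_const.add ?_) continuousOn_id hne
    exact (continuousOn_alternating (by norm_num)).div (by fun_prop)
      fun q hq => pow_ne_zero 2 (hne q hq)
  have hx : x ∈ Set.Icc ((fun q : ℝ => ((1 : ℕ) + q / (q ^ 2 - 1) / q ^ 2) / q) 2)
      ((fun q : ℝ => ((1 : ℕ) + q / (q ^ 2 - 1) / q ^ 2) / q) (181 / 100)) := by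
    constructor
    · norm_num
      linarith
    · norm_num
      linarith
  obtain ⟨q, hq, rfl⟩ := intermediate_value_Icc' (by norm_num) hc hx
  have hq1 := hq.1
  have hlt := alternating_lt_one (q := q) (by linarith)
  have hs : 0 < q ^ 2 - 1 := by nlinarith
  have hp : 0 < q - 1 := by linarith
  refine ⟨q, prepend (prepend_zeros (alternating_mem ⟨by linarith, hq.2⟩ hlt) (by positivity)
    hlt 2) 1 le_rfl (by simp) fun _ => ?_⟩
  -- the complementary tail `11(01)^∞` has value `1/q + 1/(q²-1)`
  have he : 1 / (q - 1) - q / (q ^ 2 - 1) / q ^ 2 = 1 / q + 1 / (q ^ 2 - 1) := by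
    have : q ≠ 0 := by linarith
    have : q - 1 ≠ 0 := hp.ne'
    have : q + 1 ≠ 0 := by linarith
    rw [show q ^ 2 - 1 = (q - 1) * (q + 1) by ring]
    field_simp
    ring
  have hA : 1 / q ≤ 100 / 181 := by
    rw [div_le_div_iff₀ (by linarith) (by norm_num)]
    linarith
  have hB : 1 / (q ^ 2 - 1) ≤ 4 / 9 := by
    rw [div_le_div_iff₀ hs (by norm_num)]
    nlinarith
  linarith

/-- Here the sequence `1^∞` is used, in base `1 + 1/x`. -/
lemma nonempty_of_one_le {x : ℝ} (h : 1 ≤ x) : (UnivSet x).Nonempty := by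
  have hx : 0 < x := by linarith
  have hinv : 1 / x ≤ 1 := by
    rw [div_le_one hx]
    exact h
  have hpos : 0 < 1 / x := by positivity
  have hq1 : 1 < 1 + 1 / x := by linarith
  have hT : ∀ n, T (1 + 1 / x) (fun _ => 1) n = x := by
    refine T_eq_of_rec hq1 (fun _ => le_rfl) (fun _ => x) x (fun _ => (abs_of_pos hx).le)
      fun n => ?_
    push_cast
    field_simp
    ring
  refine ⟨1 + 1 / x, mem_UnivSet_iff.mpr ⟨⟨hq1, by linarith⟩, fun _ => 1, fun _ => le_rfl, hT 0,
    fun n => ⟨by simp, fun _ => ?_⟩⟩⟩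
  rw [hT]
  simp

lemma UnivSet_nonempty {x : ℝ} (hx : 0 < x) : (UnivSet x).Nonempty := by
  rcases le_or_gt 1 x with h | h
  · exact nonempty_of_one_le h
  rcases le_or_gt (2 / 3) x with h1 | h1
  · exact nonempty_of_high h1 h
  rcases le_or_gt (3 / 5) x with h2 | h2
  · exact nonempty_of_gap h2 h1.le
  rcases le_or_gt (1 / 3) x with h3 | h3
  · exact nonempty_of_zeros 1 (by linarith) (by norm_num; linarith)
  -- here `2^{-(n+1)} < 3x ≤ 2^{-n}`, and `a = n + 2` leading zeros fit
  obtain ⟨n, hn1, hn2⟩ := exists_nat_pow_near_of_lt_one (x := 3 * x) (y := 1 / 2) (by linarith)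
    (by linarith) (by norm_num) (by norm_num)
  refine nonempty_of_zeros (n + 2) ?_ ?_
  · rw [pow_succ] at hn1
    have : (2 : ℝ) / 3 / 2 ^ (n + 2) = (1 / 2) ^ n / 6 := by
      rw [pow_add, one_div, inv_pow]
      field_simp
      norm_num
    linarith
  · have h4 : (1 / 2 : ℝ) ^ n ≤ (50 / 81) ^ n :=
      pow_le_pow_left₀ (by norm_num) (by norm_num) n
    have h5 : (81 / 50 : ℝ) / ((81 / 50) ^ 2 - 1) / (81 / 50) ^ (n + 2)
        = (81 / 50 : ℝ) / ((81 / 50) ^ 2 - 1) / (81 / 50) ^ 2 * (50 / 81) ^ n := by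
      rw [show (50 / 81 : ℝ) = (81 / 50)⁻¹ by norm_num, inv_pow, add_comm n 2, pow_add, ← div_div,
        ← div_eq_mul_inv]
    have h6 : (1 / 3 : ℝ) ≤ (81 / 50 : ℝ) / ((81 / 50) ^ 2 - 1) / (81 / 50) ^ 2 := by norm_num
    have h7 : (0 : ℝ) < (50 / 81) ^ n := by positivity
    rw [h5]
    nlinarith

/-! ### Moving the base -/

lemma bddBelow_UnivSet (x : ℝ) : BddBelow (UnivSet x) := ⟨1, fun _ hq => hq.1.1.le⟩

lemma qs_le_of_mem {q x : ℝ} (h : q ∈ UnivSet x) : qs x ≤ q := csInf_le (bddBelow_UnivSet x) h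

lemma continuousOn_T {q : ℝ} (hq : 1 < q) {d : ℕ → ℕ} (hd : ∀ i, d i ≤ 1) :
    ContinuousOn (fun p => T p d 0) (Set.Ici q) := by
  refine continuousOn_tsum (fun j => ?_) (hasSum_ones hq).summable fun j p hp => ?_
  · refine continuousOn_const.div (by fun_prop) fun p hp => ?_
    have : 0 < p := by linarith [hp.out]
    positivity
  · have hp' : q ≤ p := hp
    have hp0 : 0 < p := by linarith
    rw [Real.norm_of_nonneg (by positivity)]
    have := cast_le_one hd (0 + j)
    gcongr

lemma T_strictAnti {q p : ℝ} (hq : 1 < q) (hqp : q < p) {d : ℕ → ℕ} (hd : ∀ i, d i ≤ 1)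
    (hpos : 0 < T q d 0) : T p d 0 < T q d 0 := by
  have hp : 0 < p := by linarith
  have hq0 : 0 < q := by linarith
  -- factor `q / p < 1` out of every term
  have h : T p d 0 ≤ q / p * T q d 0 := by
    unfold T
    rw [← tsum_mul_left]
    refine (summable_T (hq.trans hqp) hd 0).tsum_le_tsum (fun j => ?_)
      ((summable_T hq hd 0).mul_left _)
    have h1 : q / p * ((d (0 + j) : ℝ) / q ^ (j + 1)) = d (0 + j) / (p * q ^ j) := by
      rw [pow_succ]
      field_simp
    rw [h1, pow_succ, mul_comm]
    gcongr
  have h2 : q / p < 1 := (div_lt_one hp).mpr hqp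
  nlinarith

/-- `q_s` has no downward jumps. -/
theorem qs_no_downward_jump (x₀ L : ℝ) (hx₀ : 0 < x₀)
    (h : Filter.Tendsto qs (nhdsWithin x₀ (Set.Ioo 0 x₀)) (nhds L)) :
    L ≤ qs x₀ := by
  have : (nhdsWithin x₀ (Set.Ioo 0 x₀)).NeBot := right_nhdsWithin_Ioo_neBot hx₀
  have hL2 : L ≤ 2 := by
    refine le_of_tendsto h ?_
    filter_upwards [self_mem_nhdsWithin] with x hx
    obtain ⟨q, hq⟩ := UnivSet_nonempty hx.1
    exact (qs_le_of_mem hq).trans hq.1.2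
  by_contra! hlt
  obtain ⟨q, hqU, hqL⟩ := exists_lt_of_csInf_lt (UnivSet_nonempty hx₀) hlt
  obtain ⟨hq, d, hd, hx, hu⟩ := mem_UnivSet_iff.mp hqU
  obtain ⟨r, hqr, hrL⟩ := exists_between hqL
  have hpos : 0 < T q d 0 := hx ▸ hx₀
  have ht : Tendsto (fun p => T p d 0) (nhdsWithin q (Set.Ioi q)) (nhds x₀) := by
    rw [← hx]
    exact (continuousOn_T hq.1 hd q Set.self_mem_Ici).mono_left
      (nhdsWithin_mono _ Set.Ioi_subset_Ici_self)
  have ht' : Tendsto (fun p => T p d 0) (nhdsWithin q (Set.Ioi q))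
      (nhdsWithin x₀ (Set.Ioo 0 x₀)) := by
    refine tendsto_nhdsWithin_iff.mpr ⟨ht, ?_⟩
    filter_upwards [self_mem_nhdsWithin, ht.eventually (lt_mem_nhds hx₀)] with p hp hp0
    exact ⟨hp0, hx ▸ T_strictAnti hq.1 hp hd hpos⟩
  have hev := (h.comp ht').eventually (lt_mem_nhds hrL)
  obtain ⟨p, hrp, hp⟩ := (hev.and (Ioo_mem_nhdsGT hqr)).exists
  have hmem : p ∈ UnivSet (T p d 0) := mem_UnivSet_iff.mpr
    ⟨⟨hq.1.trans hp.1, by linarith [hp.2]⟩, d, hd, rfl, hu.mono hq.1 hp.1.le hd⟩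
  have := qs_le_of_mem hmem
  simp only [Function.comp] at hrp
  linarith [hp.2]
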